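/- arXiv:2412.13499 — 2 statements merged into one kernel-verified Lean document; each statement's English description precedes it below -/
import Mathlib

section
/- Let p be a selective ultrafilter on ω and let u, v ∈ 𝓖^p. Then ρ_p(u+v) ≥ max{ρ_p(u), ρ_p(v)}. Moreover, if 0 < ρ_p(u) ≤ ρ_p(v), then ρ_p(u+v) > ρ_p(v). -/
open Filter

attribute [local instance] Ultrafilter.add Ultrafilter.addSemigroup

/-- `sumPow u n` is the `n`-fold sum `u + ⋯ + u` of the ultrafilter `u`, for `n ≥ 1`
(with junk value `u` at `n = 0`). -/
def sumPow (u : Ultrafilter ℕ) : ℕ → Ultrafilter ℕ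
  | 0 => u
  | 1 => u
  | n + 2 => sumPow u (n + 1) + u

/-- The `u`-limit of a sequence of ultrafilters: `A ∈ ulim u v ↔ {n | A ∈ v n} ∈ u`. -/
def ulim {α : Type*} (u : Ultrafilter ℕ) (v : ℕ → Ultrafilter α) : Ultrafilter α := u.bind v

/-- A selective ultrafilter: nonprincipal, and every `f : ℕ → ℕ` is constant or injective on
some set of the ultrafilter. -/
def IsSelective (p : Ultrafilter ℕ) : Prop :=
  (∀ n : ℕ, p ≠ pure n) ∧
    ∀ f : ℕ → ℕ, ∃ A ∈ p, (∃ c, ∀ a ∈ A, f a = c) ∨ Set.InjOn f A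

/-- The cumulative hierarchy `𝓖_α^p`: `𝓖_α^p` consists of the principal ultrafilters (once
`α ≥ 1`) together with all `p`-limits of sequences lying in some earlier level. -/
noncomputable def Glevel (p : Ultrafilter ℕ) : Ordinal → Set (Ultrafilter ℕ) :=
  WellFounded.fix Ordinal.lt_wf fun α IH =>
    {u | (∃ n : ℕ, u = pure n) ∧ 1 ≤ α} ∪
      {u | ∃ β : Ordinal, ∃ h : β < α, ∃ v : ℕ → Ultrafilter ℕ,
        (∀ n, v n ∈ IH β h) ∧ u = ulim p v}

/-- The rank `ρ_p(u) = min {α | u ∈ 𝓖_{α+1}^p}`. -/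
noncomputable def Grank (p u : Ultrafilter ℕ) : Ordinal :=
  sInf {α : Ordinal | u ∈ Glevel p (α + 1)}


namespace S17

theorem ev_ulim {p : Ultrafilter ℕ} {w : ℕ → Ultrafilter ℕ} {P : ℕ → Prop} :
    (∀ᶠ x in (ulim p w : Filter ℕ), P x) ↔ ∀ᶠ n in (p : Filter ℕ), ∀ᶠ x in (w n : Filter ℕ), P x :=
  Iff.rfl

theorem uext {u v : Ultrafilter ℕ}
    (h : ∀ P : ℕ → Prop, (∀ᶠ x in (u : Filter ℕ), P x) ↔ ∀ᶠ x in (v : Filter ℕ), P x) : u = v :=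
  Ultrafilter.ext fun s => h (· ∈ s)

theorem exists_sep {u v : Ultrafilter ℕ} (h : u ≠ v) :
    ∃ B : ℕ → Prop, (∀ᶠ x in (u : Filter ℕ), B x) ∧ (∀ᶠ x in (v : Filter ℕ), ¬ B x) := by
  by_contra hc
  push Not at hc
  apply h
  apply uext
  intro P
  constructor
  · exact fun hP => hc P hP
  · intro hP
    by_contra hn
    have h1 := hc (fun x => ¬ P x) (Ultrafilter.eventually_not.2 hn)
    exact Ultrafilter.eventually_not.1 h1 hP

theorem eq_pure {u : Ultrafilter ℕ} {n : ℕ} (h : ∀ᶠ x in (u : Filter ℕ), x = n) : u = pure n := by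
  apply uext
  intro P
  have h1 : (∀ᶠ x in ((pure n : Ultrafilter ℕ) : Filter ℕ), P x) ↔ P n := Iff.rfl
  rw [h1]
  constructor
  · intro hP
    obtain ⟨x, hx, rfl⟩ := (hP.and h).exists
    exact hx
  · intro hP
    filter_upwards [h] with x hx
    rw [hx]; exact hP

theorem ulim_congr {p : Ultrafilter ℕ} {w z : ℕ → Ultrafilter ℕ}
    (h : ∀ᶠ n in (p : Filter ℕ), w n = z n) : ulim p w = ulim p z := by
  apply uext
  intro P
  rw [ev_ulim, ev_ulim]
  constructor
  · intro hP
    filter_upwards [hP, h] with n h1 h2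
    rw [← h2]; exact h1
  · intro hP
    filter_upwards [hP, h] with n h1 h2
    rw [h2]; exact h1

theorem ulim_const {p : Ultrafilter ℕ} {w : ℕ → Ultrafilter ℕ} {a : Ultrafilter ℕ}
    (h : ∀ᶠ n in (p : Filter ℕ), w n = a) : ulim p w = a := by
  rw [ulim_congr (z := fun _ => a) h]
  apply uext
  intro P
  rw [ev_ulim]
  simp

theorem ne_ev {p : Ultrafilter ℕ} (hp : IsSelective p) (n : ℕ) :
    ∀ᶠ x in (p : Filter ℕ), x ≠ n := by
  rw [Ultrafilter.eventually_not]
  exact fun h => hp.1 n (eq_pure h)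

theorem gt_ev {p : Ultrafilter ℕ} (hp : IsSelective p) (n : ℕ) :
    ∀ᶠ x in (p : Filter ℕ), n < x := by
  induction n with
  | zero => filter_upwards [ne_ev hp 0] with x hx using Nat.pos_of_ne_zero hx
  | succ n ih => filter_upwards [ih, ne_ev hp (n+1)] with x h1 h2; omega

/-- Selectivity as an eventual statement for functions all of whose values are negligible. -/
theorem sel_inj {p : Ultrafilter ℕ} (hp : IsSelective p) (f : ℕ → ℕ)
    (hf : ∀ c, ∀ᶠ x in (p : Filter ℕ), f x ≠ c) : ∃ A ∈ p, Set.InjOn f A := by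
  obtain ⟨A, hA, h | h⟩ := hp.2 f
  · obtain ⟨c, hc⟩ := h
    obtain ⟨x, h1, h2⟩ := ((hf c).and (show ∀ᶠ x in (p : Filter ℕ), x ∈ A from hA)).exists
    exact absurd (hc x h2) h1
  · exact ⟨A, hA, h⟩

theorem pseudo {p : Ultrafilter ℕ} (hp : IsSelective p) (E : ℕ → ℕ → Prop)
    (hE : ∀ n, ∀ᶠ m in (p : Filter ℕ), E n m) :
    ∃ A ∈ p, ∀ n, ∃ k, ∀ m ∈ A, k ≤ m → E n m := by
  classical
  have hex : ∀ m, ∃ n, ¬ (E n m ∧ n < m) := fun m => ⟨m, by simp⟩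
  obtain ⟨A, hA, hinj⟩ := sel_inj hp (fun m => Nat.find (hex m)) (by
    intro c
    filter_upwards [hE c, gt_ev hp c] with m h1 h2 h3
    exact (h3 ▸ Nat.find_spec (hex m)) ⟨h1, h2⟩)
  refine ⟨A, hA, fun n => ?_⟩
  have hfin : {m ∈ A | Nat.find (hex m) ≤ n}.Finite := by
    apply Set.Finite.of_finite_image (f := fun m => Nat.find (hex m))
    · apply (Set.finite_Iic n).subset
      rintro _ ⟨m, hm, rfl⟩
      exact hm.2
    · exact hinj.mono fun m hm => hm.1
  obtain ⟨k, hk⟩ := hfin.bddAbove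
  refine ⟨k + 1, fun m hm hkm => ?_⟩
  by_contra hn
  have : m ≤ k := hk ⟨hm, Nat.find_le (fun h => hn h.1)⟩
  omega

theorem diag {p : Ultrafilter ℕ} (hp : IsSelective p) (E : ℕ → ℕ → Prop)
    (hE : ∀ n, ∀ᶠ m in (p : Filter ℕ), E n m) :
    ∃ A ∈ p, ∀ n ∈ A, ∀ m ∈ A, n < m → E n m := by
  classical
  obtain ⟨A, hA, hk⟩ := pseudo hp E hE
  choose k hk using hk
  let h : ℕ → ℕ := fun n => n + 1 + ∑ i ∈ Finset.range (n+1), k i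
  have hh1 : ∀ n, n < h n := fun n => by simp only [h]; omega
  have hh2 : ∀ i n, i ≤ n → k i ≤ h n := by
    intro i n hin
    have : k i ≤ ∑ i ∈ Finset.range (n+1), k i :=
      Finset.single_le_sum (f := k) (fun _ _ => Nat.zero_le _) (Finset.mem_range.2 (by omega))
    simp only [h]; omega
  let H : ℕ → ℕ := fun j => h^[j] 0
  have hHs : ∀ j, H (j+1) = h (H j) := fun j => Function.iterate_succ_apply' h j 0
  have hHm : StrictMono H := strictMono_nat_of_lt_succ fun j => by rw [hHs]; exact hh1 _
  have hex : ∀ m, ∃ j, m < H (j+1) := fun m => ⟨m, lt_of_lt_of_le (Nat.lt_succ_self m) (hHm.le_apply)⟩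
  let J : ℕ → ℕ := fun m => Nat.find (hex m)
  have hJ1 : ∀ m, m < H (J m + 1) := fun m => Nat.find_spec (hex m)
  have hJ2 : ∀ m, H (J m) ≤ m := by
    intro m
    rcases Nat.eq_zero_or_pos (J m) with h0 | h0
    · rw [h0]; exact Nat.zero_le _
    · have := Nat.find_min (hex m) (m := J m - 1) (by change J m - 1 < J m; omega)
      rw [Nat.sub_add_cancel h0] at this
      omega
  obtain ⟨B, hB, hinj⟩ := sel_inj hp J (by
    intro c
    filter_upwards [gt_ev hp (H (c+1))] with m h1 h2
    have := hJ1 m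
    rw [h2] at this
    omega)
  have hpar : ∃ c, ∀ᶠ m in (p : Filter ℕ), J m % 2 = c := by
    by_cases h0 : ∀ᶠ m in (p : Filter ℕ), J m % 2 = 0
    · exact ⟨0, h0⟩
    · refine ⟨1, ?_⟩
      filter_upwards [Ultrafilter.eventually_not.2 h0] with m hm
      omega
  obtain ⟨c, hc⟩ := hpar
  refine ⟨{m | (m ∈ A ∧ m ∈ B) ∧ J m % 2 = c}, ?_, ?_⟩
  · exact (Filter.Eventually.and (Filter.Eventually.and hA hB) hc)
  · rintro n ⟨⟨hnA, hnB⟩, hnc⟩ m ⟨⟨hmA, hmB⟩, hmc⟩ hnm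
    have hne : J n ≠ J m := fun h => hnm.ne (hinj hnB hmB h)
    have hlt : J n + 2 ≤ J m := by
      have : J n < J m := by
        by_contra hcon
        have h1 : H (J m + 1) ≤ H (J n) := hHm.monotone (by omega)
        have := hJ1 m
        have := hJ2 n
        omega
      omega
    apply hk n m hmA
    calc k n ≤ h (H (J n + 1)) := hh2 _ _ (hJ1 n).le
      _ = H (J n + 2) := (hHs _).symm
      _ ≤ H (J m) := hHm.monotone hlt
      _ ≤ m := hJ2 m

/-- Strong discreteness of nonconstant `p`-limits. -/
theorem discrete {p : Ultrafilter ℕ} (hp : IsSelective p) (w : ℕ → Ultrafilter ℕ)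
    (hw : ¬ ∀ᶠ n in (p : Filter ℕ), w n = ulim p w) :
    ∃ f : ℕ → ℕ, ∀ᶠ n in (p : Filter ℕ), ∀ᶠ x in (w n : Filter ℕ), f x = n := by
  classical
  have hw' := Ultrafilter.eventually_not.2 hw
  have : ∀ n, ∃ B : ℕ → Prop, w n ≠ ulim p w → ((∀ᶠ x in (w n : Filter ℕ), B x) ∧
      (∀ᶠ x in (ulim p w : Filter ℕ), ¬ B x)) := by
    intro n
    by_cases h : w n = ulim p w
    · exact ⟨fun _ => True, fun h' => absurd h h'⟩
    · obtain ⟨B, hB⟩ := exists_sep h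
      exact ⟨B, fun _ => hB⟩
  choose B hB using this
  obtain ⟨A, hA, hd⟩ := diag hp (fun n m => w n ≠ ulim p w → ∀ᶠ x in (w m : Filter ℕ), ¬ B n x) (by
    intro n
    by_cases h : w n = ulim p w
    · exact Filter.Eventually.of_forall fun m h' => absurd h h'
    · have := ev_ulim.1 (hB n h).2
      filter_upwards [this] with m hm _ using hm)
  let Q : ℕ → ℕ → Prop := fun x n => n ∈ A ∧ w n ≠ ulim p w ∧ B n x
  refine ⟨fun x => if h : ∃ n, Q x n then Nat.find h else 0, ?_⟩
  filter_upwards [hw', (show ∀ᶠ x in (p : Filter ℕ), x ∈ A from hA)] with m hm hmA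
  have h1 : ∀ᶠ x in (w m : Filter ℕ), ∀ n ∈ Finset.range m, ¬ Q x n := by
    rw [Filter.eventually_all_finset]
    intro n hn
    by_cases h : n ∈ A ∧ w n ≠ ulim p w
    · filter_upwards [hd n h.1 m hmA (Finset.mem_range.1 hn) h.2] with x hx hq using hx hq.2.2
    · exact Filter.Eventually.of_forall fun x hq => h ⟨hq.1, hq.2.1⟩
  filter_upwards [h1, (hB m hm).1] with x hx1 hx2
  have hq : Q x m := ⟨hmA, hm, hx2⟩
  have hex : ∃ n, Q x n := ⟨m, hq⟩
  rw [dif_pos hex]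
  apply le_antisymm (Nat.find_le hq)
  by_contra hcon
  exact hx1 _ (Finset.mem_range.2 (not_le.1 hcon)) (Nat.find_spec hex)

theorem ae_id {p : Ultrafilter ℕ} (hp : IsSelective p) (h : ℕ → ℕ)
    (hh : ∀ P : ℕ → Prop, (∀ᶠ x in (p : Filter ℕ), P x) → ∀ᶠ x in (p : Filter ℕ), P (h x)) :
    ∀ᶠ x in (p : Filter ℕ), h x = x := by
  obtain ⟨A, hA, hd⟩ := diag hp (fun n m => m ≠ h n ∧ h m ≠ n) (fun n =>
    (ne_ev hp (h n)).and (hh (fun x => x ≠ n) (ne_ev hp n)))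
  filter_upwards [(show ∀ᶠ x in (p : Filter ℕ), x ∈ A from hA), hh (· ∈ A) hA] with n h1 h2
  rcases lt_trichotomy (h n) n with h3 | h3 | h3
  · exact absurd rfl (hd _ h2 _ h1 h3).2
  · exact h3
  · exact absurd rfl (hd _ h1 _ h2 h3).1

theorem dichotomy {p : Ultrafilter ℕ} (hp : IsSelective p) (q : ℕ → Ultrafilter ℕ)
    (hq : ulim p q = p) :
    (∀ᶠ n in (p : Filter ℕ), q n = p) ∨
      (∀ᶠ n in (p : Filter ℕ), ∀ᶠ x in (q n : Filter ℕ), x = n) := by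
  by_cases hc : ∀ᶠ n in (p : Filter ℕ), q n = p
  · exact Or.inl hc
  right
  obtain ⟨h, hh⟩ := discrete hp q (by rw [hq]; exact hc)
  have hid := ae_id hp h (by
    intro P hP
    have : ∀ᶠ x in (ulim p q : Filter ℕ), P (h x) := by
      rw [ev_ulim]
      filter_upwards [hh, hP] with n h1 h2
      filter_upwards [h1] with x hx
      rw [hx]; exact h2
    rwa [hq] at this)
  have hid' : ∀ᶠ x in (ulim p q : Filter ℕ), h x = x := by rw [hq]; exact hid
  rw [ev_ulim] at hid'
  filter_upwards [hh, hid'] with n h1 h2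
  filter_upwards [h1, h2] with x h3 h4
  rw [← h4, h3]

theorem uniq_aux {p : Ultrafilter ℕ} (w z : ℕ → Ultrafilter ℕ)
    (hwz : ulim p w = ulim p z) (g : ℕ → ℕ)
    (hw : ∀ᶠ n in (p : Filter ℕ), ∀ᶠ x in (w n : Filter ℕ), g x = n)
    (hz : ∀ᶠ n in (p : Filter ℕ), ∀ᶠ x in (z n : Filter ℕ), g x = n) :
    ∀ᶠ n in (p : Filter ℕ), w n = z n := by
  by_contra hc
  have hc' := Ultrafilter.eventually_not.2 hc
  have : ∀ n, ∃ B : ℕ → Prop, w n ≠ z n → ((∀ᶠ x in (w n : Filter ℕ), B x) ∧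
      (∀ᶠ x in (z n : Filter ℕ), ¬ B x)) := by
    intro n
    by_cases h : w n = z n
    · exact ⟨fun _ => True, fun h' => absurd h h'⟩
    · obtain ⟨B, hB⟩ := exists_sep h
      exact ⟨B, fun _ => hB⟩
  choose B hB using this
  have h1 : ∀ᶠ x in (ulim p w : Filter ℕ), B (g x) x := by
    rw [ev_ulim]
    filter_upwards [hw, hc'] with n h1 h2
    filter_upwards [h1, (hB n h2).1] with x h3 h4
    rw [h3]; exact h4
  rw [hwz, ev_ulim] at h1
  obtain ⟨n, h2, h3, h4⟩ := (h1.and (hz.and hc')).exists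
  obtain ⟨x, h5, h6, h7⟩ := (h2.and (h3.and (hB n h4).2)).exists
  rw [h6] at h5
  exact h7 h5

theorem map_disc {p : Ultrafilter ℕ} (w : ℕ → Ultrafilter ℕ) (f : ℕ → ℕ)
    (hf : ∀ᶠ n in (p : Filter ℕ), ∀ᶠ x in (w n : Filter ℕ), f x = n) :
    (ulim p w).map f = p := by
  apply uext
  intro P
  have h1 : (∀ᶠ x in ((ulim p w).map f : Filter ℕ), P x) ↔
    ∀ᶠ n in (p : Filter ℕ), ∀ᶠ x in (w n : Filter ℕ), P (f x) := Iff.rfl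
  refine h1.trans ?_
  constructor
  · intro h
    filter_upwards [h, hf] with n h2 h3
    obtain ⟨x, h4, h5⟩ := (h2.and h3).exists
    rw [← h5]; exact h4
  · intro h
    filter_upwards [h, hf] with n h2 h3
    filter_upwards [h3] with x hx
    rw [hx]; exact h2

theorem map_ulim {p : Ultrafilter ℕ} (w : ℕ → Ultrafilter ℕ) (f : ℕ → ℕ) :
    (ulim p w).map f = ulim p (fun n => (w n).map f) :=
  uext fun _ => Iff.rfl

theorem lt_aux {p : Ultrafilter ℕ} (hp : IsSelective p) (w : ℕ → Ultrafilter ℕ) (f g : ℕ → ℕ)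
    (hf : ∀ᶠ n in (p : Filter ℕ), ∀ᶠ x in (w n : Filter ℕ), f x = n)
    (hg : ∀ᶠ n in (p : Filter ℕ), (w n).map g = p) :
    ∀ᶠ x in (ulim p w : Filter ℕ), f x < g x := by
  rw [ev_ulim]
  filter_upwards [hf, hg] with n h1 h2
  have h3 := gt_ev hp n
  rw [← h2] at h3
  have h4 : ∀ᶠ x in (w n : Filter ℕ), n < g x := h3
  filter_upwards [h1, h4] with x h5 h6
  omega

theorem uniq {p : Ultrafilter ℕ} (hp : IsSelective p) (w z : ℕ → Ultrafilter ℕ)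
    (hwz : ulim p w = ulim p z)
    (hw : ¬ ∀ᶠ n in (p : Filter ℕ), w n = ulim p w)
    (hz : ¬ ∀ᶠ n in (p : Filter ℕ), z n = ulim p z) :
    ∀ᶠ n in (p : Filter ℕ), w n = z n := by
  obtain ⟨f, hf⟩ := discrete hp w hw
  obtain ⟨g, hg⟩ := discrete hp z hz
  have hfu := map_disc w f hf
  have hgu := map_disc z g hg
  rcases dichotomy hp (fun n => (w n).map g) (by rw [← map_ulim, hwz, hgu]) with h1 | h1
  · rcases dichotomy hp (fun n => (z n).map f) (by rw [← map_ulim, ← hwz, hfu]) with h2 | h2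
    · have h3 := lt_aux hp w f g hf h1
      have h4 := lt_aux hp z g f hg h2
      rw [← hwz] at h4
      obtain ⟨x, h5, h6⟩ := (h3.and h4).exists
      omega
    · exact uniq_aux w z hwz f hf h2
  · exact uniq_aux w z hwz g h1 hg

/-! ### The hierarchy -/

inductive InG (p : Ultrafilter ℕ) : Ultrafilter ℕ → Prop
  | pure (n : ℕ) : InG p (Pure.pure n)
  | lim (w : ℕ → Ultrafilter ℕ) (h : ∀ n, InG p (w n)) : InG p (ulim p w)

theorem mem_Glevel (p u : Ultrafilter ℕ) (α : Ordinal) :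
    u ∈ Glevel p α ↔ ((∃ n : ℕ, u = pure n) ∧ 1 ≤ α) ∨
      ∃ β < α, ∃ v : ℕ → Ultrafilter ℕ, (∀ n, v n ∈ Glevel p β) ∧ u = ulim p v := by
  unfold Glevel
  rw [WellFounded.fix_eq]
  simp only [Set.mem_union, Set.mem_ofPred_eq, exists_prop]

theorem Glevel_mono (p : Ultrafilter ℕ) {α β : Ordinal} (h : α ≤ β) : Glevel p α ⊆ Glevel p β := by
  intro u hu
  rw [mem_Glevel] at hu ⊢
  rcases hu with ⟨h1, h2⟩ | ⟨γ, h1, h2⟩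
  · exact Or.inl ⟨h1, h2.trans h⟩
  · exact Or.inr ⟨γ, h1.trans_le h, h2⟩

def L (p : Ultrafilter ℕ) (α : Ordinal) (u : Ultrafilter ℕ) : Prop := u ∈ Glevel p (α + 1)

theorem L_mono {p u : Ultrafilter ℕ} {α β : Ordinal} (h : α ≤ β) (hu : L p α u) : L p β u :=
  Glevel_mono p (by gcongr) hu

theorem mem_Glevel_iff_L (p u : Ultrafilter ℕ) (α : Ordinal) :
    u ∈ Glevel p α ↔ ∃ β < α, L p β u := by
  constructor
  · intro h
    rw [mem_Glevel] at h
    rcases h with ⟨h1, h2⟩ | ⟨γ, h1, h2⟩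
    · refine ⟨0, Order.one_le_iff_pos.1 h2, ?_⟩
      unfold L
      rw [mem_Glevel]
      exact Or.inl ⟨h1, by simp⟩
    · refine ⟨γ, h1, ?_⟩
      unfold L
      rw [mem_Glevel]
      exact Or.inr ⟨γ, Order.lt_add_one_iff.2 le_rfl, h2⟩
  · rintro ⟨β, h1, h2⟩
    exact Glevel_mono p (Order.add_one_le_iff.2 h1) h2

theorem L_iff (p u : Ultrafilter ℕ) (α : Ordinal) :
    L p α u ↔ (∃ n : ℕ, u = pure n) ∨
      ∃ v : ℕ → Ultrafilter ℕ, (∀ n, ∃ β < α, L p β (v n)) ∧ u = ulim p v := by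
  constructor
  · intro h
    unfold L at h
    rw [mem_Glevel] at h
    rcases h with ⟨h1, h2⟩ | ⟨γ, h1, v, h2, h3⟩
    · exact Or.inl h1
    · refine Or.inr ⟨v, fun n => ?_, h3⟩
      rw [← mem_Glevel_iff_L]
      exact Glevel_mono p (Order.lt_add_one_iff.1 h1) (h2 n)
  · rintro (h | ⟨v, h1, h2⟩)
    · unfold L
      rw [mem_Glevel]
      exact Or.inl ⟨h, by simp⟩
    · unfold L
      rw [mem_Glevel]
      refine Or.inr ⟨α, Order.lt_add_one_iff.2 le_rfl, v, fun n => ?_, h2⟩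
      rw [mem_Glevel_iff_L]
      exact h1 n

theorem L_pure (p : Ultrafilter ℕ) (α : Ordinal) (n : ℕ) : L p α (pure n) :=
  (L_iff _ _ _).2 (Or.inl ⟨n, rfl⟩)

theorem InG_of_L {p : Ultrafilter ℕ} (α : Ordinal) : ∀ u, L p α u → InG p u := by
  induction α using WellFoundedLT.induction with
  | ind α ih =>
    intro u hu
    rw [L_iff] at hu
    rcases hu with ⟨n, rfl⟩ | ⟨v, h1, rfl⟩
    · exact InG.pure n
    · refine InG.lim v fun n => ?_
      obtain ⟨β, h2, h3⟩ := h1 n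
      exact ih β h2 _ h3

theorem InG_of_mem {p u : Ultrafilter ℕ} {α : Ordinal} (h : u ∈ Glevel p α) : InG p u := by
  obtain ⟨β, _, h⟩ := (mem_Glevel_iff_L _ _ _).1 h
  exact InG_of_L β u h

theorem exists_L {p u : Ultrafilter ℕ} (h : InG p u) : ∃ α : Ordinal, L p α u := by
  induction h with
  | pure n => exact ⟨0, L_pure p 0 n⟩
  | lim w _ ih =>
    choose α hα using ih
    refine ⟨(⨆ n, α n) + 1, (L_iff _ _ _).2 (Or.inr ⟨w, fun n => ⟨α n, ?_, hα n⟩, rfl⟩)⟩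
    exact Order.lt_add_one_iff.2 (Ordinal.le_iSup α n)

theorem L_Grank {p u : Ultrafilter ℕ} (h : InG p u) : L p (Grank p u) u :=
  csInf_mem (s := {α : Ordinal | u ∈ Glevel p (α + 1)}) (exists_L h)

theorem Grank_le {p u : Ultrafilter ℕ} {α : Ordinal} (h : L p α u) : Grank p u ≤ α :=
  csInf_le' (s := {α : Ordinal | u ∈ Glevel p (α + 1)}) h

theorem L_map {p : Ultrafilter ℕ} (f : ℕ → ℕ) (α : Ordinal) :
    ∀ u, L p α u → L p α (u.map f) := by
  induction α using WellFoundedLT.induction with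
  | ind α ih =>
    intro u hu
    rw [L_iff] at hu
    rcases hu with ⟨n, rfl⟩ | ⟨v, h1, rfl⟩
    · rw [Ultrafilter.map_pure]; exact L_pure p α _
    · rw [map_ulim]
      refine (L_iff _ _ _).2 (Or.inr ⟨_, fun n => ?_, rfl⟩)
      obtain ⟨β, h2, h3⟩ := h1 n
      exact ⟨β, h2, ih β h2 _ h3⟩

theorem InG_map {p u : Ultrafilter ℕ} (f : ℕ → ℕ) (h : InG p u) : InG p (u.map f) := by
  obtain ⟨α, h⟩ := exists_L.{0} h
  exact InG_of_L α _ (L_map f α _ h)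

theorem pure_add (n : ℕ) (v : Ultrafilter ℕ) : (pure n : Ultrafilter ℕ) + v = v.map (n + ·) :=
  uext fun _ => by rw [Ultrafilter.eventually_add]; exact Iff.rfl

theorem ulim_add (p v : Ultrafilter ℕ) (w : ℕ → Ultrafilter ℕ) :
    ulim p w + v = ulim p (fun k => w k + v) :=
  uext fun P => by
    rw [Ultrafilter.eventually_add, ev_ulim, ev_ulim]
    simp only [Ultrafilter.eventually_add]

theorem InG_add {p u v : Ultrafilter ℕ} (hu : InG p u) (hv : InG p v) : InG p (u + v) := by
  induction hu with
  | pure n => rw [pure_add]; exact InG_map _ hv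
  | lim w _ ih => rw [ulim_add]; exact InG.lim _ ih

theorem L_pure_add {p v : Ultrafilter ℕ} {α : Ordinal} (n : ℕ) :
    L p α ((pure n : Ultrafilter ℕ) + v) ↔ L p α v := by
  rw [pure_add]
  refine ⟨fun h => ?_, L_map _ α v⟩
  have := L_map (· - n) α _ h
  rw [Ultrafilter.map_map] at this
  have h2 : ((fun x => x - n) ∘ fun x => n + x) = id := by funext x; simp
  rwa [h2, Ultrafilter.map_id] at this

theorem shift_lt {v : Ultrafilter ℕ} {n m : ℕ} (hnm : n < m)
    (h : (pure n : Ultrafilter ℕ) + v = pure m + v) : False := by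
  have key : ∀ P : ℕ → Prop, (∀ᶠ x in (v : Filter ℕ), P (n + x)) →
      ∀ᶠ x in (v : Filter ℕ), P (m + x) := by
    intro P hP
    have h1 : ∀ᶠ x in ((pure n + v : Ultrafilter ℕ) : Filter ℕ), P x := by
      rw [pure_add]; exact hP
    rw [h, pure_add] at h1
    exact h1
  obtain ⟨d, hd, rfl⟩ : ∃ d, 0 < d ∧ m = n + d := ⟨m - n, by omega, by omega⟩
  have hstep : ∀ x, (n + d + x) / d = (n + x) / d + 1 := fun x => by
    rw [show n + d + x = (n + x) + d by ring, Nat.add_div_right _ hd]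
  by_cases h0 : ∀ᶠ x in (v : Filter ℕ), (n + x) / d % 2 = 0
  · obtain ⟨x, h1, h2⟩ := (h0.and (key (fun y => y / d % 2 = 0) h0)).exists
    rw [hstep] at h2
    omega
  · have h0' := Ultrafilter.eventually_not.2 h0
    obtain ⟨x, h1, h2⟩ := (h0'.and (key (fun y => ¬ y / d % 2 = 0) h0')).exists
    rw [hstep] at h2
    omega

theorem shift_inj {v : Ultrafilter ℕ} {n m : ℕ}
    (h : (pure n : Ultrafilter ℕ) + v = pure m + v) : n = m := by
  rcases lt_trichotomy n m with h1 | h1 | h1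
  · exact (shift_lt h1 h).elim
  · exact h1
  · exact (shift_lt h1 h.symm).elim

theorem keyK {p : Ultrafilter ℕ} (hp : IsSelective p) (w : ℕ → Ultrafilter ℕ)
    (hw : ¬ ∀ᶠ n in (p : Filter ℕ), w n = ulim p w) (α : Ordinal) :
    L p α (ulim p w) → ∀ᶠ n in (p : Filter ℕ), ∃ β < α, L p β (w n) := by
  induction α using WellFoundedLT.induction with
  | ind α ih =>
    intro hu
    rw [L_iff] at hu
    rcases hu with ⟨k, hk⟩ | ⟨z, h1, h2⟩
    · exfalso
      apply hw
      have : ∀ᶠ x in (ulim p w : Filter ℕ), x = k := by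
        rw [hk]; exact (rfl : k = k)
      rw [ev_ulim] at this
      filter_upwards [this] with n hn
      rw [hk]; exact eq_pure hn
    · by_cases hz : ∀ᶠ n in (p : Filter ℕ), z n = ulim p z
      · obtain ⟨n, hn⟩ := hz.exists
        obtain ⟨β, h3, h4⟩ := h1 n
        rw [hn, ← h2] at h4
        filter_upwards [ih β h3 h4] with k hk
        obtain ⟨γ, h5, h6⟩ := hk
        exact ⟨γ, h5.trans h3, h6⟩
      · filter_upwards [uniq hp w z h2 hw hz] with n hn
        rw [hn]; exact h1 n

theorem keyK' {p : Ultrafilter ℕ} (hp : IsSelective p) (w : ℕ → Ultrafilter ℕ) (α : Ordinal)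
    (h : L p α (ulim p w)) : ∀ᶠ n in (p : Filter ℕ), L p α (w n) := by
  by_cases hw : ∀ᶠ n in (p : Filter ℕ), w n = ulim p w
  · filter_upwards [hw] with n hn
    rw [hn]; exact h
  · filter_upwards [keyK hp w hw α h] with n hn
    obtain ⟨β, h1, h2⟩ := hn
    exact L_mono h1.le h2

theorem lemA {p : Ultrafilter ℕ} (hp : IsSelective p) {u v : Ultrafilter ℕ} (hu : InG p u)
    (α : Ordinal) : L p α (u + v) → L p α v ∧ ((¬ ∃ n : ℕ, u = pure n) → ∃ β < α, L p β v) := by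
  induction hu with
  | pure n =>
    intro h
    exact ⟨(L_pure_add n).1 h, fun h' => absurd ⟨n, rfl⟩ h'⟩
  | lim w _ ih =>
    intro h
    rw [ulim_add] at h
    have h1 := keyK' hp _ α h
    obtain ⟨k, hk⟩ := h1.exists
    refine ⟨(ih k hk).1, fun hnp => ?_⟩
    by_cases hpr : ∀ᶠ n in (p : Filter ℕ), ∃ m : ℕ, w n = pure m
    · by_cases hc : ∀ᶠ n in (p : Filter ℕ), w n + v = ulim p (fun k => w k + v)
      · exfalso
        obtain ⟨k, ⟨m, hm⟩, h3⟩ := (hpr.and hc).exists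
        apply hnp
        refine ⟨m, ulim_const ?_⟩
        filter_upwards [hpr, hc] with n h4 h5
        obtain ⟨m', hm'⟩ := h4
        rw [← h3, hm, hm'] at h5
        rw [hm', shift_inj h5]
      · obtain ⟨k, ⟨m, hm⟩, β, h3, h4⟩ := (hpr.and (keyK hp _ hc α h)).exists
        rw [hm, L_pure_add] at h4
        exact ⟨β, h3, h4⟩
    · obtain ⟨k, h3, h4⟩ := (h1.and (Ultrafilter.eventually_not.2 hpr)).exists
      exact (ih k h3).2 h4

theorem lemA' {p : Ultrafilter ℕ} (hp : IsSelective p) {u v : Ultrafilter ℕ} (hu : InG p u)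
    (hv : InG p v) (n : ℕ) (h : u + v = pure n + v) : u = pure n := by
  by_cases hpr : ∃ m : ℕ, u = pure m
  · obtain ⟨m, rfl⟩ := hpr
    rw [shift_inj h]
  · exfalso
    have h1 := L_Grank.{0} hv
    rw [← L_pure_add n, ← h] at h1
    obtain ⟨β, h2, h3⟩ := (lemA hp hu _ h1).2 hpr
    exact absurd (Grank_le h3) (not_le.2 h2)

theorem cancel {p : Ultrafilter ℕ} (hp : IsSelective p) {u v : Ultrafilter ℕ} (hu : InG p u)
    (hv : InG p v) : ∀ u', InG p u' → u + v = u' + v → u = u' := by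
  induction hu with
  | pure n => exact fun u' hu' h => (lemA' hp hu' hv n h.symm).symm
  | lim w hw ih =>
    intro u' hu'
    by_cases hc : ∀ᶠ n in (p : Filter ℕ), w n = ulim p w
    · obtain ⟨k, hk⟩ := hc.exists
      rw [← hk]
      exact ih k u' hu'
    have hcv : ¬ ∀ᶠ n in (p : Filter ℕ), w n + v = ulim p (fun k => w k + v) := by
      intro h
      apply hc
      filter_upwards [h] with n hn
      rw [← ulim_add] at hn
      exact ih n _ (InG.lim w hw) hn
    induction hu' with
    | pure n => exact fun h => lemA' hp (InG.lim w hw) hv n h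
    | lim w' hw' ih' =>
      intro h
      by_cases hc' : ∀ᶠ n in (p : Filter ℕ), w' n + v = ulim p (fun k => w' k + v)
      · symm
        apply ulim_const
        filter_upwards [hc'] with n hn
        rw [← ulim_add] at hn
        exact (ih' n (h.trans hn.symm)).symm
      · rw [ulim_add, ulim_add] at h
        apply ulim_congr
        filter_upwards [uniq hp _ _ h hcv hc'] with n hn
        exact ih n _ (hw' n) hn

theorem L_of_ev {p : Ultrafilter ℕ} {w : ℕ → Ultrafilter ℕ} {α : Ordinal}
    (h : ∀ᶠ n in (p : Filter ℕ), ∃ β < α, L p β (w n)) : L p α (ulim p w) := by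
  classical
  obtain ⟨k, β, hβ, hk⟩ := h.exists
  rw [L_iff]
  refine Or.inr ⟨fun n => if ∃ β < α, L p β (w n) then w n else w k, fun n => ?_, ulim_congr ?_⟩
  · by_cases hn : ∃ β < α, L p β (w n)
    · simp only [if_pos hn]; exact hn
    · simp only [if_neg hn]; exact ⟨β, hβ, hk⟩
  · filter_upwards [h] with n hn
    rw [if_pos hn]

theorem lemC {p : Ultrafilter ℕ} (hp : IsSelective p) {u v : Ultrafilter ℕ} (hu : InG p u)
    (hv : InG p v) : ∀ α : Ordinal, L p α (u + v) → L p α u := by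
  induction hu with
  | pure n => exact fun α _ => L_pure p α n
  | lim w hw ih =>
    intro α h
    by_cases hc : ∀ᶠ n in (p : Filter ℕ), w n = ulim p w
    · obtain ⟨k, hk⟩ := hc.exists
      rw [← hk] at h ⊢
      exact ih k α h
    have hcv : ¬ ∀ᶠ n in (p : Filter ℕ), w n + v = ulim p (fun k => w k + v) := by
      intro h
      apply hc
      filter_upwards [h] with n hn
      rw [← ulim_add] at hn
      exact cancel hp (hw n) hv _ (InG.lim w hw) hn
    rw [ulim_add] at h
    apply L_of_ev
    filter_upwards [keyK hp _ hcv α h] with n hn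
    obtain ⟨β, h1, h2⟩ := hn
    exact ⟨β, h1, ih n β h2⟩

end S17

/-- If `p` is selective and `u, v ∈ 𝓖^p`, then `ρ_p(u + v) ≥ max (ρ_p u) (ρ_p v)`; moreover if
`0 < ρ_p u ≤ ρ_p v` then `ρ_p(u + v) > ρ_p v`. -/
theorem statement17 (p : Ultrafilter ℕ) (hp : IsSelective p) (u v : Ultrafilter ℕ)
    (hu : ∃ α, u ∈ Glevel p α) (hv : ∃ α, v ∈ Glevel p α) :
    max (Grank p u) (Grank p v) ≤ Grank p (u + v) ∧
      (0 < Grank p u → Grank p u ≤ Grank p v → Grank p v < Grank p (u + v)) := by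
  obtain ⟨_, hu⟩ := hu
  obtain ⟨_, hv⟩ := hv
  have hu := S17.InG_of_mem hu
  have hv := S17.InG_of_mem hv
  have huv := S17.InG_add hu hv
  refine ⟨max_le (S17.Grank_le (S17.lemC hp hu hv _ (S17.L_Grank huv)))
    (S17.Grank_le (S17.lemA hp hu _ (S17.L_Grank huv)).1), fun h0 _ => ?_⟩
  obtain ⟨β, h1, h2⟩ := (S17.lemA hp hu _ (S17.L_Grank huv)).2 (by
    rintro ⟨n, rfl⟩
    exact absurd (S17.Grank_le (S17.L_pure p 0 n)) (not_le.2 h0))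
  exact (S17.Grank_le h2).trans_lt h1
end

section
/- Let p be a selective ultrafilter on ω. Then every nonprincipal element u of 𝓖^p generates a free subsemigroup: for all n, m ≥ 1, u^n = u^m implies n = m. In particular, no element of 𝓖^p is an idempotent ultrafilter. -/
open Filter

attribute [local instance] Ultrafilter.add Ultrafilter.addSemigroup

/-- `InG p` is the smallest family of ultrafilters on `ℕ` containing all principal ultrafilters
and closed under `p`-limits. -/
inductive InG (p : Ultrafilter ℕ) : Ultrafilter ℕ → Prop
  | principal (n : ℕ) : InG p (pure n)
  | lim (v : ℕ → Ultrafilter ℕ) : (∀ n, InG p (v n)) → InG p (ulim p v)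

theorem ev_ulim (p : Ultrafilter ℕ) (a : ℕ → Ultrafilter ℕ) (P : ℕ → Prop) :
    (∀ᶠ k in (ulim p a : Filter ℕ), P k) ↔
      ∀ᶠ n in (p : Filter ℕ), ∀ᶠ k in (a n : Filter ℕ), P k := Iff.rfl

theorem ult_ext {x y : Ultrafilter ℕ}
    (h : ∀ P : ℕ → Prop, (∀ᶠ k in (x : Filter ℕ), P k) → ∀ᶠ k in (y : Filter ℕ), P k) :
    x = y := by
  symm
  refine Ultrafilter.coe_le_coe.1 ?_
  intro s hs
  exact h (· ∈ s) hs

theorem ne_sep {x y : Ultrafilter ℕ} (h : x ≠ y) :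
    ∃ P : ℕ → Prop, (∀ᶠ k in (x : Filter ℕ), P k) ∧ ∀ᶠ k in (y : Filter ℕ), ¬ P k := by
  by_contra hc
  refine h (ult_ext fun P hP => ?_)
  by_contra hn
  exact hc ⟨P, hP, Ultrafilter.eventually_not.2 hn⟩

theorem eq_pure {x : Ultrafilter ℕ} {j : ℕ} (h : ∀ᶠ k in (x : Filter ℕ), k = j) : x = pure j := by
  symm
  refine ult_ext fun P hP => ?_
  have hP' : P j := hP
  filter_upwards [h] with k hk
  rw [hk]; exact hP'

theorem ev_ge {p : Ultrafilter ℕ} (hp : ∀ n : ℕ, p ≠ pure n) (n : ℕ) :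
    ∀ᶠ k in (p : Filter ℕ), n < k := by
  induction n with
  | zero =>
    have : ∀ᶠ k in (p : Filter ℕ), ¬ k = 0 :=
      Ultrafilter.eventually_not.2 fun h => hp 0 (eq_pure h)
    filter_upwards [this] with k hk
    omega
  | succ n ih =>
    have : ∀ᶠ k in (p : Filter ℕ), ¬ k = n + 1 :=
      Ultrafilter.eventually_not.2 fun h => hp (n + 1) (eq_pure h)
    filter_upwards [this, ih] with k hk h2
    omega

/-- Discreteness of non-constant p-limits. -/
theorem discrete {p : Ultrafilter ℕ} (hp : IsSelective p) (a : ℕ → Ultrafilter ℕ)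
    (ha : ∀ᶠ n in (p : Filter ℕ), a n ≠ ulim p a) :
    ∃ d : ℕ → ℕ, ∀ᶠ n in (p : Filter ℕ), ∀ᶠ k in (a n : Filter ℕ), d k = n := by
  classical
  have hB : ∀ n, ∃ P : ℕ → Prop, (a n ≠ ulim p a → ∀ᶠ k in (a n : Filter ℕ), P k) ∧
      ∀ᶠ k in (ulim p a : Filter ℕ), ¬ P k := by
    intro n
    by_cases h : a n = ulim p a
    · exact ⟨fun _ => False, fun h' => (h' h).elim, by simp⟩
    · obtain ⟨P, h1, h2⟩ := ne_sep h
      exact ⟨P, fun _ => h1, h2⟩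
  choose B hB1 hB2 using hB
  let f : ℕ → ℕ := fun m =>
    if h : ∃ n, ∀ᶠ k in (a m : Filter ℕ), B n k then Nat.find h else 0
  have hf : ∀ m, a m ≠ ulim p a → (∀ᶠ k in (a m : Filter ℕ), B (f m) k) ∧
      ∀ j < f m, ∀ᶠ k in (a m : Filter ℕ), ¬ B j k := by
    intro m hm
    have hex : ∃ n, ∀ᶠ k in (a m : Filter ℕ), B n k := ⟨m, hB1 m hm⟩
    have hfm : f m = Nat.find hex := dif_pos hex
    rw [hfm]
    exact ⟨Nat.find_spec hex, fun j hj => Ultrafilter.eventually_not.2 (Nat.find_min hex hj)⟩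
  obtain ⟨A, hA, hc | hinj⟩ := hp.2 f
  · exfalso
    obtain ⟨c, hc⟩ := hc
    have h1 : ∀ᶠ k in (ulim p a : Filter ℕ), B c k := by
      rw [ev_ulim]
      filter_upwards [ha, hA] with m hm hmA
      rw [← hc m hmA]
      exact (hf m hm).1
    obtain ⟨k, h, h'⟩ := (h1.and (hB2 c)).exists
    exact h' h
  · let d : ℕ → ℕ := fun k =>
      if h : ∃ m, m ∈ A ∧ B (f m) k ∧ ∀ j < f m, ¬ B j k then h.choose else 0
    refine ⟨d, ?_⟩
    filter_upwards [ha, hA] with m hm hmA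
    have h2 : ∀ᶠ k in (a m : Filter ℕ), ∀ j ∈ Finset.range (f m), ¬ B j k := by
      rw [Filter.eventually_all_finset]
      intro j hj
      exact (hf m hm).2 j (Finset.mem_range.1 hj)
    filter_upwards [(hf m hm).1, h2] with k hk1 hk2
    have hex : ∃ m, m ∈ A ∧ B (f m) k ∧ ∀ j < f m, ¬ B j k :=
      ⟨m, hmA, hk1, fun j hj => hk2 j (Finset.mem_range.2 hj)⟩
    have hd : d k = hex.choose := dif_pos hex
    obtain ⟨g1, g2, g3⟩ := hex.choose_spec
    rw [hd]
    refine hinj g1 hmA ?_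
    rcases lt_trichotomy (f hex.choose) (f m) with h | h | h
    · exact (hk2 _ (Finset.mem_range.2 h) g2).elim
    · exact h
    · exact (g3 _ h hk1).elim

noncomputable def flipFun (h : ℕ → ℕ) (n : ℕ) : Bool :=
  if _hn : h n < n then !(flipFun h (h n)) else true
termination_by n

/-- `hh` says that the image of `p` under `h` is `p`. -/
theorem fix_lt {p : Ultrafilter ℕ} {h : ℕ → ℕ}
    (hh : ∀ P : ℕ → Prop, (∀ᶠ n in (p : Filter ℕ), P n) → ∀ᶠ n in (p : Filter ℕ), P (h n))
    (hlt : ∀ᶠ n in (p : Filter ℕ), h n < n) : False := by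
  have key : ∀ᶠ n in (p : Filter ℕ), flipFun h n = !(flipFun h (h n)) := by
    filter_upwards [hlt] with n hn
    rw [flipFun, dif_pos hn]
  by_cases hc : ∀ᶠ n in (p : Filter ℕ), flipFun h n = true
  · obtain ⟨n, h1, h2, h3⟩ := (hc.and ((hh _ hc).and key)).exists
    simp [h1, h2] at h3
  · have hc := Ultrafilter.eventually_not.2 hc
    obtain ⟨n, h1, h2, h3⟩ := (hc.and ((hh _ hc).and key)).exists
    simp at h1 h2
    simp [h1, h2] at h3

theorem sub_lemma {p : Ultrafilter ℕ} (hp : IsSelective p) (a : ℕ → Ultrafilter ℕ) (d e : ℕ → ℕ)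
    (hd : ∀ᶠ n in (p : Filter ℕ), ∀ᶠ k in (a n : Filter ℕ), d k = n)
    (he : (ulim p a).map e = p) :
    (∀ᶠ k in (ulim p a : Filter ℕ), d k = e k) ∨ (∀ᶠ k in (ulim p a : Filter ℕ), d k < e k) := by
  let q : ℕ → Ultrafilter ℕ := fun n => (a n).map e
  have hq : ulim p q = p := by
    refine Eq.trans ?_ he
    refine ult_ext fun P hP => ?_
    exact hP
  by_cases hc : ∀ᶠ n in (p : Filter ℕ), q n = p
  · right
    rw [ev_ulim]
    filter_upwards [hc, hd] with n hn hdn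
    have h1 : ∀ᶠ k in (q n : Filter ℕ), n < k := by
      rw [hn]; exact ev_ge hp.1 n
    have h2 : ∀ᶠ k in (a n : Filter ℕ), n < e k := h1
    filter_upwards [h2, hdn] with k h3 h4
    omega
  · left
    have hc := Ultrafilter.eventually_not.2 hc
    obtain ⟨c, hcc⟩ := discrete hp q (by rw [hq]; exact hc)
    have hevp : ∀ P : ℕ → Prop, (∀ᶠ n in (p : Filter ℕ), P n) ↔
        ∀ᶠ n in (p : Filter ℕ), ∀ᶠ k in (q n : Filter ℕ), P k := by
      intro P
      rw [← ev_ulim, hq]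
    obtain ⟨A, hA, hcon | hinj⟩ := hp.2 c
    · exfalso
      obtain ⟨j, hj⟩ := hcon
      refine hp.1 j (eq_pure ?_)
      have hA' := (hevp (· ∈ A)).1 hA
      filter_upwards [hA', hcc] with n h1 h2
      obtain ⟨k, hk1, hk2⟩ := (h1.and h2).exists
      rw [← hk2]; exact hj k hk1
    · have hA' := (hevp (· ∈ A)).1 hA
      have hex : ∀ n, ∃ t, ((∀ᶠ k in (q n : Filter ℕ), k ∈ A) →
          (∀ᶠ k in (q n : Filter ℕ), c k = n) →
          (c t = n ∧ ∀ᶠ k in (q n : Filter ℕ), k = t)) := by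
        intro n
        by_cases h1 : (∀ᶠ k in (q n : Filter ℕ), k ∈ A)
        · by_cases h2 : (∀ᶠ k in (q n : Filter ℕ), c k = n)
          · obtain ⟨t, ht1, ht2⟩ := (h1.and h2).exists
            refine ⟨t, fun _ _ => ⟨ht2, ?_⟩⟩
            filter_upwards [h1, h2] with k g1 g2
            exact hinj g1 ht1 (g2.trans ht2.symm)
          · exact ⟨0, fun _ h => (h2 h).elim⟩
        · exact ⟨0, fun h => (h1 h).elim⟩
      choose h hh using hex
      have hch : ∀ᶠ n in (p : Filter ℕ), c (h n) = n ∧ ∀ᶠ k in (q n : Filter ℕ), k = h n := by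
        filter_upwards [hA', hcc] with n h1 h2
        exact hh n h1 h2
      have hhp : ∀ P : ℕ → Prop, (∀ᶠ n in (p : Filter ℕ), P n) →
          ∀ᶠ n in (p : Filter ℕ), P (h n) := by
        intro P hP
        filter_upwards [(hevp P).1 hP, hch] with n h1 h2
        obtain ⟨k, hk1, hk2⟩ := (h1.and h2.2).exists
        rw [← hk2]; exact hk1
      have hcp : ∀ P : ℕ → Prop, (∀ᶠ n in (p : Filter ℕ), P n) →
          ∀ᶠ n in (p : Filter ℕ), P (c n) := by
        intro P hP
        by_contra hn
        have hn := hhp _ (Ultrafilter.eventually_not.2 hn)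
        obtain ⟨n, g1, g2, g3⟩ := (hP.and (hn.and hch)).exists
        rw [g3.1] at g2
        exact g2 g1
      have hid : ∀ᶠ n in (p : Filter ℕ), h n = n := by
        by_contra hn
        have hn := Ultrafilter.eventually_not.2 hn
        have : ∀ᶠ n in (p : Filter ℕ), h n < n ∨ n < h n := by
          filter_upwards [hn] with n hn
          omega
        rcases Ultrafilter.eventually_or.1 this with h1 | h1
        · exact fix_lt hhp h1
        · refine fix_lt hcp ?_
          by_contra hn2
          have hn2 := hhp _ (Ultrafilter.eventually_not.2 hn2)
          obtain ⟨n, g1, g2, g3⟩ := (h1.and (hn2.and hch)).exists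
          rw [g3.1] at g2
          exact g2 g1
      rw [ev_ulim]
      filter_upwards [hid, hch, hd] with n h1 h2 h3
      have h4 : ∀ᶠ k in (a n : Filter ℕ), e k = h n := h2.2
      filter_upwards [h3, h4] with k h5 h6
      omega

theorem key_lemma {p : Ultrafilter ℕ} (hp : IsSelective p) (a b : ℕ → Ultrafilter ℕ)
    (hab : ulim p a = ulim p b)
    (ha : ∀ᶠ n in (p : Filter ℕ), a n ≠ ulim p a)
    (hb : ∀ᶠ n in (p : Filter ℕ), b n ≠ ulim p b) : ∃ n, a n = b n := by
  obtain ⟨d, hd⟩ := discrete hp a ha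
  obtain ⟨e, he⟩ := discrete hp b hb
  have mapd : ∀ (a : ℕ → Ultrafilter ℕ) (d : ℕ → ℕ),
      (∀ᶠ n in (p : Filter ℕ), ∀ᶠ k in (a n : Filter ℕ), d k = n) →
      (ulim p a).map d = p := by
    intro a d hd
    symm
    refine ult_ext fun P hP => ?_
    change ∀ᶠ n in (p : Filter ℕ), ∀ᶠ k in (a n : Filter ℕ), P (d k)
    filter_upwards [hP, hd] with n h1 h2
    filter_upwards [h2] with k hk
    rw [hk]; exact h1
  have hde : ∀ᶠ k in (ulim p a : Filter ℕ), d k = e k := by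
    rcases sub_lemma hp a d e hd (by rw [hab]; exact mapd b e he) with h | h
    · exact h
    · rcases sub_lemma hp b e d he (by rw [← hab]; exact mapd a d hd) with h' | h'
      · rw [← hab] at h'
        filter_upwards [h'] with k hk using hk.symm
      · rw [← hab] at h'
        obtain ⟨k, h1, h2⟩ := (h.and h').exists
        omega
  by_contra hne
  push Not at hne
  choose C hC1 hC2 using fun n => ne_sep (hne n)
  have h1 : ∀ᶠ k in (ulim p a : Filter ℕ), C (e k) k := by
    rw [ev_ulim] at hde ⊢
    filter_upwards [hd, hde] with n h1 h2
    filter_upwards [h1, h2, hC1 n] with k g1 g2 g3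
    rw [← g2, g1]; exact g3
  have h2 : ∀ᶠ k in (ulim p a : Filter ℕ), ¬ C (e k) k := by
    rw [hab, ev_ulim]
    filter_upwards [he] with n h1
    filter_upwards [h1, hC2 n] with k g1 g3
    rw [g1]; exact g3
  obtain ⟨k, g1, g2⟩ := (h1.and h2).exists
  exact g2 g1

/-- `RankLE p o u`: `u` is built by an iterated `p`-limit of rank at most `o`. -/
inductive RankLE (p : Ultrafilter ℕ) : Ordinal.{0} → Ultrafilter ℕ → Prop
  | principal (o : Ordinal.{0}) (n : ℕ) : RankLE p o (pure n)
  | lim (o : Ordinal.{0}) (f : ℕ → Ordinal.{0}) (v : ℕ → Ultrafilter ℕ) :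
      (∀ n, f n < o) → (∀ n, RankLE p (f n) (v n)) → RankLE p o (ulim p v)

theorem RankLE.mono {p : Ultrafilter ℕ} {o o' : Ordinal.{0}} {u : Ultrafilter ℕ}
    (h : RankLE p o u) (ho : o ≤ o') : RankLE p o' u := by
  cases h with
  | principal _ n => exact .principal _ _
  | lim _ f v h1 h2 => exact .lim o' f v (fun n => (h1 n).trans_le ho) h2

theorem RankLE.map {p : Ultrafilter ℕ} {o : Ordinal.{0}} {u : Ultrafilter ℕ} (g : ℕ → ℕ)
    (h : RankLE p o u) : RankLE p o (u.map g) := by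
  induction h with
  | principal o n => 
    rw [Ultrafilter.map_pure]; exact .principal _ _
  | lim o f v h1 h2 ih =>
    have : (ulim p v).map g = ulim p (fun n => (v n).map g) := by
      refine ult_ext fun P hP => ?_
      exact hP
    rw [this]
    exact .lim o f _ h1 ih

theorem InG.rank {p u : Ultrafilter ℕ} (h : InG p u) : ∃ o, RankLE p o u := by
  induction h with
  | principal n => exact ⟨0, .principal _ _⟩
  | lim v _ ih =>
    choose f hf using ih
    exact ⟨_, .lim (Order.succ (⨆ n, f n)) f v
      (fun n => Order.lt_succ_of_le (Ordinal.le_iSup f n)) hf⟩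

theorem RankLE.exists_min {p u : Ultrafilter ℕ} {o : Ordinal.{0}} (h : RankLE p o u) :
    ∃ o' ≤ o, RankLE p o' u ∧ ∀ r < o', ¬ RankLE p r u := by
  induction o using WellFoundedLT.induction with
  | _ o ih =>
    by_cases hc : ∃ r < o, RankLE p r u
    · obtain ⟨r, hr, hru⟩ := hc
      obtain ⟨o', h1, h2⟩ := ih r hr hru
      exact ⟨o', h1.trans hr.le, h2⟩
    · push Not at hc
      exact ⟨o, le_rfl, h, hc⟩

theorem ev_add (u v : Ultrafilter ℕ) (P : ℕ → Prop) :
    (∀ᶠ k in ((u + v : Ultrafilter ℕ) : Filter ℕ), P k) ↔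
      ∀ᶠ n in (u : Filter ℕ), ∀ᶠ m in (v : Filter ℕ), P (n + m) :=
  Ultrafilter.eventually_add u v P

theorem ulim_add (p : Ultrafilter ℕ) (v : ℕ → Ultrafilter ℕ) (u : Ultrafilter ℕ) :
    ulim p v + u = ulim p (fun n => v n + u) := by
  refine ult_ext fun P hP => ?_
  rw [ev_add] at hP
  rw [ev_ulim] at hP ⊢
  filter_upwards [hP] with n hn
  rw [ev_add]; exact hn

theorem pure_add' (k : ℕ) (u : Ultrafilter ℕ) : pure k + u = u.map (k + ·) := by
  refine ult_ext fun P hP => ?_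
  rw [ev_add] at hP
  exact hP

theorem add_eq_pure {v u : Ultrafilter ℕ} {j : ℕ} (h : v + u = pure j) :
    ∃ t, u = pure t := by
  have h1 : ∀ᶠ k in ((v + u : Ultrafilter ℕ) : Filter ℕ), k = j := by
    rw [h]; exact (rfl : j = j)
  rw [ev_add] at h1
  obtain ⟨n, hn⟩ := h1.exists
  refine ⟨j - n, eq_pure ?_⟩
  filter_upwards [hn] with k hk
  omega

theorem lemmaA {p : Ultrafilter ℕ} (hp : IsSelective p) {v : Ultrafilter ℕ} (hv : InG p v)
    (u : Ultrafilter ℕ) : ∀ o : Ordinal.{0}, RankLE p o (v + u) → RankLE p o u := by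
  induction hv with
  | principal k =>
    intro o h
    rw [pure_add'] at h
    have h2 := h.map (· - k)
    rw [Ultrafilter.map_map] at h2
    have : ((· - k) ∘ (k + ·) : ℕ → ℕ) = id := by funext x; simp
    rw [this, Ultrafilter.map_id] at h2
    exact h2
  | lim v hv ih =>
    intro o h
    obtain ⟨o', ho', hr, hmin⟩ := h.exists_min
    refine RankLE.mono ?_ ho'
    generalize hw : ulim p v + u = w at hr hmin
    by_cases hc : ∀ᶠ n in (p : Filter ℕ), v n + u ≠ w
    · cases hr with
      | principal _ j =>
        obtain ⟨t, rfl⟩ := add_eq_pure hw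
        exact .principal _ _
      | lim _ f x h1 h2 =>
        have hx : ∀ n, x n ≠ ulim p x := fun n hn => hmin _ (h1 n) (hn ▸ h2 n)
        rw [ulim_add] at hw
        obtain ⟨n, hn⟩ := key_lemma hp x (fun n => v n + u) hw.symm
          (Eventually.of_forall hx) (by rw [hw]; exact hc)
        have h3 := h2 n
        rw [hn] at h3
        exact (ih n _ h3).mono (h1 n).le
    · obtain ⟨n, hn⟩ := (not_eventually.1 hc).exists
      rw [not_not] at hn
      exact ih n o' (hn ▸ hr)

theorem lemmaB {p : Ultrafilter ℕ} (hp : IsSelective p) {v : Ultrafilter ℕ} (hv : InG p v)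
    (u : Ultrafilter ℕ) (hu : InG p u) : v + u = u → v = pure 0 := by
  induction hv with
  | principal k =>
    intro h
    by_contra hk
    have hk0 : 0 < k := by
      rcases Nat.eq_zero_or_pos k with h0 | h0
      · exact (hk (by rw [h0])).elim
      · exact h0
    rw [pure_add'] at h
    have tr : ∀ P : ℕ → Prop, (∀ᶠ n in (u : Filter ℕ), P n) →
        ∀ᶠ n in (u : Filter ℕ), P (k + n) := by
      intro P hP
      rw [← h] at hP
      exact hP
    have e1 : ∀ n, (k + n) / k = n / k + 1 := fun n => by
      rw [Nat.add_div_left _ hk0]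
    by_cases hc : ∀ᶠ n in (u : Filter ℕ), (n / k) % 2 = 0
    · obtain ⟨n, h1, h2⟩ := (hc.and (tr _ hc)).exists
      rw [e1] at h2; omega
    · have hc := Ultrafilter.eventually_not.2 hc
      obtain ⟨n, h1, h2⟩ := (hc.and (tr _ hc)).exists
      rw [e1] at h2; omega
  | lim v hv ih =>
    intro h
    have h' := h
    rw [ulim_add] at h'
    by_cases hc : ∀ᶠ n in (p : Filter ℕ), v n + u ≠ u
    · obtain ⟨o, ho⟩ := hu.rank
      obtain ⟨o', -, hr, hmin⟩ := ho.exists_min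
      cases hr with
      | principal _ j =>
        refine eq_pure ?_
        have h1 : ∀ᶠ k in ((ulim p v + pure j : Ultrafilter ℕ) : Filter ℕ), k = j := by
          rw [h]; exact (rfl : j = j)
        rw [ev_add] at h1
        filter_upwards [h1] with n hn
        have : n + j = j := hn
        omega
      | lim _ f x h1 h2 =>
        exfalso
        have hx : ∀ n, x n ≠ ulim p x := fun n hn => hmin _ (h1 n) (hn ▸ h2 n)
        obtain ⟨n, hn⟩ := key_lemma hp x (fun n => v n + ulim p x) h'.symm
          (Eventually.of_forall hx) (by rw [h']; exact hc)
        have h3 := h2 n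
        rw [hn] at h3
        exact hmin _ (h1 n) (lemmaA hp (hv n) _ _ h3)
    · have hc : ∀ᶠ n in (p : Filter ℕ), v n + u = u := by
        by_contra h2
        exact hc (Ultrafilter.eventually_not.2 h2)
      refine eq_pure ?_
      rw [ev_ulim]
      filter_upwards [hc] with n hn
      rw [ih n hn]
      exact (rfl : (0 : ℕ) = 0)

theorem InG.map {p u : Ultrafilter ℕ} (g : ℕ → ℕ) (h : InG p u) : InG p (u.map g) := by
  induction h with
  | principal n => rw [Ultrafilter.map_pure]; exact .principal _
  | lim v h ih =>
    have : (ulim p v).map g = ulim p (fun n => (v n).map g) := by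
      refine ult_ext fun P hP => ?_
      exact hP
    rw [this]
    exact .lim _ ih

theorem InG.add {p v u : Ultrafilter ℕ} (hv : InG p v) (hu : InG p u) : InG p (v + u) := by
  induction hv with
  | principal n => rw [pure_add']; exact hu.map _
  | lim v h ih => rw [ulim_add]; exact .lim _ ih

theorem sumPow_inG {p u : Ultrafilter ℕ} (hu : InG p u) (n : ℕ) : InG p (sumPow u (n + 1)) := by
  induction n with
  | zero => exact hu
  | succ n ih => exact ih.add hu

theorem sumPow_add (u : Ultrafilter ℕ) (a b : ℕ) :
    sumPow u (a + 1 + (b + 1)) = sumPow u (a + 1) + sumPow u (b + 1) := by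
  induction b with
  | zero => rfl
  | succ b ih =>
    change sumPow u (a + 1 + (b + 1)) + u = sumPow u (a + 1) + (sumPow u (b + 1) + u)
    rw [ih, add_assoc]

theorem sumPow_ne {u : Ultrafilter ℕ} (hu : ∀ k : ℕ, u ≠ pure k) (n : ℕ) :
    sumPow u (n + 1) ≠ pure 0 := by
  cases n with
  | zero => exact hu 0
  | succ n =>
    intro h
    obtain ⟨t, ht⟩ := add_eq_pure (v := sumPow u (n + 1)) (u := u) h
    exact hu t ht

theorem sumPow_lt {p : Ultrafilter ℕ} (hp : IsSelective p) {u : Ultrafilter ℕ} (hu : InG p u)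
    (hn : ∀ k : ℕ, u ≠ pure k) {n m : ℕ} (h1 : 1 ≤ n) (h : n < m) :
    sumPow u n ≠ sumPow u m := by
  intro he
  obtain ⟨b, rfl⟩ : ∃ b, n = b + 1 := ⟨n - 1, by omega⟩
  obtain ⟨a, rfl⟩ : ∃ a, m = a + 1 + (b + 1) := ⟨m - (b + 1) - 1, by omega⟩
  rw [sumPow_add] at he
  exact sumPow_ne hn a (lemmaB hp (sumPow_inG hu a) _ (sumPow_inG hu b) he.symm)

/-- If `p` is selective, every nonprincipal element `u` of `𝓖^p` generates a free subsemigroup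
(`u^n = u^m → n = m` for `n, m ≥ 1`); in particular no element of `𝓖^p` is an idempotent
ultrafilter. -/
theorem statement18 (p : Ultrafilter ℕ) (hp : IsSelective p) :
    (∀ u : Ultrafilter ℕ, InG p u → (∀ k : ℕ, u ≠ pure k) →
      ∀ n m : ℕ, 1 ≤ n → 1 ≤ m → sumPow u n = sumPow u m → n = m) ∧
    ∀ u : Ultrafilter ℕ, InG p u → (∀ k : ℕ, u ≠ pure k) → u + u ≠ u := by
  refine ⟨fun u hu hn n m h1 h2 h => ?_, fun u hu hn h => hn 0 (lemmaB hp hu u hu h)⟩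
  rcases lt_trichotomy n m with hl | hl | hl
  · exact (sumPow_lt hp hu hn h1 hl h).elim
  · exact hl
  · exact (sumPow_lt hp hu hn h2 hl h.symm).elim
end
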